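/- arXiv:1506.02517 — 2 statements merged into one kernel-verified Lean document; each statement's English description precedes it below -/
import Mathlib

section
/- Let q ≥ 2 and n ≥ 1 be integers, let p be a real number with 1 ≤ p < ∞, let C ⊆ (ℤ/qℤ)^n be a code, and let r be a real number with 0 ≤ 2r < q. If every point of (ℤ/qℤ)^n lies within p-Lee distance r of exactly one codeword of C, then every point of ℤ^n lies within ℓ_p distance r of exactly one point of the Construction A lattice Λ(C) ⊆ ℤ^n; that is, Λ(C) is an r-perfect code in ℤ^n in the ℓ_p metric. -/
open Finset

/-- The `ℓ_p` distance on `ℤ^n` for a real parameter `p`. -/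
noncomputable def dp (n : ℕ) (p : ℝ) (x y : Fin n → ℤ) : ℝ :=
  (∑ i, (|x i - y i| : ℝ) ^ p) ^ (1 / p)

/-- The Lee distance on `ℤ/qℤ`. -/
def dLee {q : ℕ} (x y : ZMod q) : ℕ := min (x - y).val (y - x).val

/-- The `p`-Lee distance on `(ℤ/qℤ)^n`. -/
noncomputable def dpLee (n q : ℕ) (p : ℝ) (x y : Fin n → ZMod q) : ℝ :=
  (∑ i, (dLee (x i) (y i) : ℝ) ^ p) ^ (1 / p)

/-- The Construction A lattice of a code `C ⊆ (ℤ/qℤ)^n`: the preimage of `C` under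
coordinatewise reduction modulo `q`. -/
def constructionA (n q : ℕ) (C : Set (Fin n → ZMod q)) : Set (Fin n → ℤ) :=
  {x | (fun i => (x i : ZMod q)) ∈ C}

/-- The Lee distance of two residues is at most the distance of any representatives. -/
theorem dLee_intCast_le_natAbs {q : ℕ} (hq : 0 < q) (a b : ℤ) :
    dLee (a : ZMod q) (b : ZMod q) ≤ (a - b).natAbs := by
  have : NeZero q := ⟨hq.ne'⟩
  have h₁ := ZMod.val_intCast (n := q) (a - b)
  have h₂ := ZMod.val_intCast (n := q) (b - a)
  push_cast at h₁ h₂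
  unfold dLee
  have emod_le : ∀ t : ℤ, 0 ≤ t → t % q ≤ t := fun t ht => by
    have h₃ := Int.emod_add_mul_ediv t q
    have h₄ := mul_nonneg (Int.natCast_nonneg q) (Int.ediv_nonneg ht (Int.natCast_nonneg q))
    linarith
  rcases le_total 0 (a - b) with h | h
  · have h₃ := emod_le (a - b) h
    omega
  · have h₃ := emod_le (b - a) (by omega)
    omega

/-- Every residue has a representative realizing its Lee distance to a given integer. -/
theorem exists_intCast_eq_natAbs_sub_eq_dLee {q : ℕ} (hq : 0 < q) (a : ℤ) (c : ZMod q) :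
    ∃ b : ℤ, (b : ZMod q) = c ∧ (a - b).natAbs = dLee (a : ZMod q) c := by
  have : NeZero q := ⟨hq.ne'⟩
  rcases le_total ((a : ZMod q) - c).val (c - (a : ZMod q)).val with h | h
  · refine ⟨a - (((a : ZMod q) - c).val : ℤ), by simp, ?_⟩
    rw [dLee, min_eq_left h]
    omega
  · refine ⟨a + ((c - (a : ZMod q)).val : ℤ), by simp, ?_⟩
    rw [dLee, min_eq_right h]
    omega

/-- The `p`-Lee distance of two reduced vectors is at most their `ℓ_p` distance. -/
theorem dpLee_intCast_le_dp {n q : ℕ} (hq : 0 < q) {p : ℝ} (hp : 0 < p) (x y : Fin n → ℤ) :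
    dpLee n q p (fun i => (x i : ZMod q)) (fun i => (y i : ZMod q)) ≤ dp n p x y := by
  unfold dpLee dp
  gcongr with i
  have h := dLee_intCast_le_natAbs hq (x i) (y i)
  have hcast : ((x i - y i).natAbs : ℝ) = |(x i : ℝ) - y i| := by
    rw [Nat.cast_natAbs]; push_cast; rfl
  rw [← hcast]
  exact_mod_cast h

/-- Each coordinate difference is bounded by the `ℓ_p` distance. -/
theorem abs_sub_le_dp {n : ℕ} {p : ℝ} (hp : 0 < p) (x y : Fin n → ℤ) (i : Fin n) :
    |(x i : ℝ) - y i| ≤ dp n p x y := by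
  unfold dp
  rw [one_div, Real.le_rpow_inv_iff_of_pos (abs_nonneg _) (by positivity) hp]
  exact Finset.single_le_sum (f := fun j => |(x j : ℝ) - y j| ^ p)
    (fun j _ => by positivity) (Finset.mem_univ i)

/-- Every residue vector lifts to an integer vector realizing its `p`-Lee distance to a given
integer vector. -/
theorem exists_intCast_eq_dp_eq_dpLee {n q : ℕ} (hq : 0 < q) (p : ℝ) (x : Fin n → ℤ)
    (c : Fin n → ZMod q) :
    ∃ y : Fin n → ℤ, (fun i => (y i : ZMod q)) = c ∧
      dp n p x y = dpLee n q p (fun i => (x i : ZMod q)) c := by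
  choose y hy hd using fun i => exists_intCast_eq_natAbs_sub_eq_dLee hq (x i) (c i)
  refine ⟨y, funext hy, ?_⟩
  unfold dp dpLee
  congr 1
  refine Finset.sum_congr rfl fun i _ => ?_
  rw [← hd i, Nat.cast_natAbs]
  push_cast
  rfl

/-- Two integer vectors congruent modulo `q` and both within distance `r < q / 2` of a common
point coincide. -/
theorem eq_of_intCast_eq_of_dp_le {n q : ℕ} {p r : ℝ} (hp : 0 < p) (hrq : 2 * r < q)
    {x y z : Fin n → ℤ} (hxy : (fun i => (x i : ZMod q)) = fun i => (y i : ZMod q))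
    (hx : dp n p z x ≤ r) (hy : dp n p z y ≤ r) : x = y := by
  funext i
  have hdvd : (q : ℤ) ∣ y i - x i := (ZMod.intCast_eq_intCast_iff_dvd_sub _ _ _).1 (congrFun hxy i)
  have h₁ := abs_le.1 ((abs_sub_le_dp hp z x i).trans hx)
  have h₂ := abs_le.1 ((abs_sub_le_dp hp z y i).trans hy)
  have hlt : |((y i - x i : ℤ) : ℝ)| < q := by
    push_cast
    rw [abs_lt]
    constructor <;> linarith
  have hzero := Int.eq_zero_of_abs_lt_dvd hdvd (by exact_mod_cast hlt)
  omega

/-- If `0 ≤ 2r < q` and `C ⊆ (ℤ/qℤ)^n` is an `r`-perfect code in the `p`-Lee metric, then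
the Construction A lattice `Λ(C) ⊆ ℤ^n` is an `r`-perfect code in the `ℓ_p` metric. -/
theorem constructionA_perfect (n q : ℕ) (hn : 1 ≤ n) (hq : 2 ≤ q) (p : ℝ) (hp : 1 ≤ p)
    (C : Set (Fin n → ZMod q)) (r : ℝ) (hr : 0 ≤ r) (hrq : 2 * r < q)
    (hperf : ∀ z : Fin n → ZMod q, ∃! c, c ∈ C ∧ dpLee n q p z c ≤ r) :
    ∀ z : Fin n → ℤ, ∃! c, c ∈ constructionA n q C ∧ dp n p z c ≤ r := by
  intro z
  have hp0 : 0 < p := by linarith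
  have hq0 : 0 < q := by omega
  obtain ⟨c, ⟨hcC, hcr⟩, huniq⟩ := hperf fun i => (z i : ZMod q)
  obtain ⟨y, rfl, hyd⟩ := exists_intCast_eq_dp_eq_dpLee hq0 p z c
  refine ⟨y, ⟨hcC, hyd.trans_le hcr⟩, ?_⟩
  rintro x ⟨hxC, hxr⟩
  exact eq_of_intCast_eq_of_dp_le hp0 hrq
    (huniq _ ⟨hxC, (dpLee_intCast_le_dp hq0 hp0 z x).trans hxr⟩) hxr (hyd.trans_le hcr)
end

section
/- Let n ≥ 2 be an integer and p a real number with 1 < p < ∞. Let Δ_p^n be the supremum, over all full-rank lattices L ⊆ ℝ^n, of the superball packing density V_{n,p}·(d_p(L)/2)^n / covol(L), where d_p(L) is the minimum ℓ_p norm of a nonzero vector of L and covol(L) is the covolume of L. Then Δ_p^n < 1, and for every additive subgroup Λ of ℤ^n whose translates of B_p^n(r) partition ℤ^n (r a real number ≥ 0), the radius satisfies r ≤ (n^{1/p}/2)·(1 + (Δ_p^n)^{1/n}) / (1 − (Δ_p^n)^{1/n}). -/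
open Finset MeasureTheory

/-- `V_{n,p}`: the Lebesgue volume of the unit superball in `ℝ^n`. -/
noncomputable def Vnp (n : ℕ) (p : ℝ) : ℝ :=
  (MeasureTheory.volume {x : Fin n → ℝ | ∑ i, |x i| ^ p ≤ 1}).toReal

/-- The set of superball packing densities `V_{n,p}·(d_p(L)/2)^n / covol(L)` over all
full-rank lattices `L ⊆ ℝ^n`, where `d_p(L)` is the minimum `ℓ_p` norm of a nonzero
vector of `L`. -/
noncomputable def densitySet (n : ℕ) (p : ℝ) : Set ℝ :=
  {δ : ℝ | ∃ (L : Submodule ℤ (Fin n → ℝ)) (_ : DiscreteTopology L) (_ : IsZLattice ℝ L)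
      (d : ℝ), IsLeast {e : ℝ | ∃ v ∈ L, v ≠ 0 ∧ e = (∑ i, |v i| ^ p) ^ (1 / p)} d ∧
      δ = Vnp n p * (d / 2) ^ n / ZLattice.covolume L MeasureTheory.volume}

/-- The `ℓ_p` norm on `ℝ^n`, as a seminorm. -/
noncomputable def lpSeminorm (n : ℕ) (p : ℝ) (hp : 1 ≤ p) : Seminorm ℝ (Fin n → ℝ) :=
  Seminorm.of (fun x => (∑ i, |x i| ^ p) ^ (1 / p))
    (fun x y => Real.Lp_add_le univ x y hp)
    (fun a x => by
      have hp0 : p ≠ 0 := by positivity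
      simp only [Pi.smul_apply, smul_eq_mul, abs_mul, Real.norm_eq_abs]
      simp_rw [Real.mul_rpow (abs_nonneg _) (abs_nonneg _)]
      rw [← Finset.mul_sum, Real.mul_rpow (by positivity) (by positivity),
        ← Real.rpow_mul (abs_nonneg _), mul_one_div_cancel hp0, Real.rpow_one])

theorem lpSeminorm_apply {n : ℕ} {p : ℝ} (hp : 1 ≤ p) (x : Fin n → ℝ) :
    lpSeminorm n p hp x = (∑ i, |x i| ^ p) ^ (1 / p) := rfl

theorem lpSeminorm_lt_iff {n : ℕ} {p : ℝ} (hp : 1 ≤ p) (x : Fin n → ℝ) {r : ℝ} (hr : 0 ≤ r) :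
    lpSeminorm n p hp x < r ↔ ∑ i, |x i| ^ p < r ^ p := by
  rw [lpSeminorm_apply, one_div, Real.rpow_inv_lt_iff_of_pos (by positivity) hr (by positivity)]

theorem lpSeminorm_le_iff {n : ℕ} {p : ℝ} (hp : 1 ≤ p) (x : Fin n → ℝ) {r : ℝ} (hr : 0 ≤ r) :
    lpSeminorm n p hp x ≤ r ↔ ∑ i, |x i| ^ p ≤ r ^ p := by
  rw [lpSeminorm_apply, one_div, Real.rpow_inv_le_iff_of_pos (by positivity) hr (by positivity)]

theorem abs_apply_le_lpSeminorm {n : ℕ} {p : ℝ} (hp : 1 ≤ p) (x : Fin n → ℝ) (i : Fin n) :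
    |x i| ≤ lpSeminorm n p hp x := by
  rw [lpSeminorm_apply, one_div, Real.le_rpow_inv_iff_of_pos (abs_nonneg _) (by positivity)
    (by positivity)]
  exact Finset.single_le_sum (f := fun i => |x i| ^ p) (fun _ _ => by positivity) (mem_univ i)

theorem lpSeminorm_pos {n : ℕ} {p : ℝ} (hp : 1 ≤ p) {x : Fin n → ℝ} (hx : x ≠ 0) :
    0 < lpSeminorm n p hp x := by
  obtain ⟨i, hi⟩ := Function.ne_iff.mp hx
  exact (abs_pos.mpr hi).trans_le (abs_apply_le_lpSeminorm hp x i)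

theorem continuous_lpSeminorm {n : ℕ} {p : ℝ} (hp : 1 ≤ p) :
    Continuous (lpSeminorm n p hp) := by
  change Continuous fun x : Fin n → ℝ => (∑ i, |x i| ^ p) ^ (1 / p)
  refine Continuous.rpow_const (continuous_finsetSum _ fun i _ => ?_) fun _ => Or.inr (by positivity)
  exact (continuous_apply i).abs.rpow_const fun _ => Or.inr (by positivity)

theorem abs_midpoint_rpow_lt {p : ℝ} (hp : 1 < p) {a b : ℝ} (hab : a ≠ b) :
    |(a + b) / 2| ^ p < (|a| ^ p + |b| ^ p) / 2 := by
  by_cases h : |a| = |b|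
  · obtain rfl : a = -b := (abs_eq_abs.mp h).resolve_left hab
    have hb : b ≠ 0 := by rintro rfl; simp at hab
    have := Real.rpow_pos_of_pos (abs_pos.mpr hb) p
    simp only [neg_add_cancel, zero_div, abs_zero, abs_neg]
    rw [Real.zero_rpow (by positivity)]
    linarith
  · have h1 := (strictConvexOn_rpow hp).2 (abs_nonneg a) (abs_nonneg b) h
      (by norm_num : (0 : ℝ) < 1 / 2) (by norm_num : (0 : ℝ) < 1 / 2) (by norm_num)
    simp only [smul_eq_mul] at h1
    have h2 : |(a + b) / 2| ≤ 1 / 2 * |a| + 1 / 2 * |b| := by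
      rw [abs_div, abs_two]
      linarith [abs_add_le a b]
    have h3 := Real.rpow_le_rpow (abs_nonneg _) h2 (by positivity : 0 ≤ p)
    linarith

theorem lpSeminorm_add_lt_two {n : ℕ} {p : ℝ} (hp : 1 < p) {x y : Fin n → ℝ}
    (hx : lpSeminorm n p hp.le x ≤ 1) (hy : lpSeminorm n p hp.le y ≤ 1) (hxy : x ≠ y) :
    lpSeminorm n p hp.le (x + y) < 2 := by
  rw [lpSeminorm_le_iff _ _ zero_le_one, Real.one_rpow] at hx hy
  obtain ⟨j, hj⟩ := Function.ne_iff.mp hxy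
  have hmid : lpSeminorm n p hp.le ((1 / 2 : ℝ) • (x + y)) < 1 := by
    rw [lpSeminorm_lt_iff _ _ zero_le_one, Real.one_rpow]
    calc ∑ i, |((1 / 2 : ℝ) • (x + y)) i| ^ p
        = ∑ i, |(x i + y i) / 2| ^ p := by
          refine Finset.sum_congr rfl fun i _ => ?_
          rw [Pi.smul_apply, Pi.add_apply, smul_eq_mul, one_div_mul_eq_div]
      _ < ∑ i, (|x i| ^ p + |y i| ^ p) / 2 := by
          refine Finset.sum_lt_sum (fun i _ => ?_) ⟨j, mem_univ j, abs_midpoint_rpow_lt hp hj⟩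
          by_cases h : x i = y i
          · rw [h, add_self_div_two, add_self_div_two]
          · exact (abs_midpoint_rpow_lt hp h).le
      _ = (∑ i, |x i| ^ p + ∑ i, |y i| ^ p) / 2 := by
          rw [← Finset.sum_div, Finset.sum_add_distrib]
      _ ≤ 1 := by linarith
  rw [map_smul_eq_mul, Real.norm_eq_abs, abs_of_pos (by norm_num)] at hmid
  linarith

/-- Uniform convexity of the `ℓ_p` norm on `ℝ^n`. -/
theorem exists_lpSeminorm_add_le {n : ℕ} {p : ℝ} (hp : 1 < p) {ε : ℝ} (hε : 0 < ε) :
    ∃ M : ℝ, 0 ≤ M ∧ M < 2 ∧ ∀ x y : Fin n → ℝ, lpSeminorm n p hp.le x ≤ 1 →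
      lpSeminorm n p hp.le y ≤ 1 → ε ≤ lpSeminorm n p hp.le (x - y) →
      lpSeminorm n p hp.le (x + y) ≤ M := by
  set q := lpSeminorm n p hp.le
  have hq : Continuous q := continuous_lpSeminorm hp.le
  let K : Set ((Fin n → ℝ) × (Fin n → ℝ)) := {z | q z.1 ≤ 1 ∧ q z.2 ≤ 1 ∧ ε ≤ q (z.1 - z.2)}
  have hball : ∀ x : Fin n → ℝ, q x ≤ 1 → ‖x‖ ≤ 1 := fun x hx =>
    (pi_norm_le_iff_of_nonneg zero_le_one).mpr fun i =>
      (abs_apply_le_lpSeminorm hp.le x i).trans hx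
  have hK : IsCompact K := by
    refine Metric.isCompact_of_isClosed_isBounded ?_ ?_
    · refine (isClosed_le (hq.comp continuous_fst) continuous_const).inter
        ((isClosed_le (hq.comp continuous_snd) continuous_const).inter
          (isClosed_le continuous_const (hq.comp (continuous_fst.sub continuous_snd))))
    · refine isBounded_iff_forall_norm_le.mpr ⟨1, fun z hz => ?_⟩
      exact norm_prod_le_iff.mpr ⟨hball _ hz.1, hball _ hz.2.1⟩
  rcases K.eq_empty_or_nonempty with hemp | hne
  · refine ⟨1, zero_le_one, one_lt_two, fun x y hx hy hxy => ?_⟩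
    exact absurd (show (x, y) ∈ K from ⟨hx, hy, hxy⟩) (hemp ▸ Set.notMem_empty _)
  · obtain ⟨z, hz, hmax⟩ := hK.exists_isMaxOn hne
      (hq.comp (continuous_fst.add continuous_snd)).continuousOn
    refine ⟨q (z.1 + z.2), apply_nonneg _ _, lpSeminorm_add_lt_two hp hz.1 hz.2.1 ?_,
      fun x y hx hy hxy => isMaxOn_iff.mp hmax (x, y) ⟨hx, hy, hxy⟩⟩
    intro h
    have := hz.2.2
    rw [h, sub_self, map_zero] at this
    linarith

theorem exists_unit_pair_lpSeminorm {n : ℕ} (hn : 2 ≤ n) {p : ℝ} (hp : 1 ≤ p) :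
    ∃ u w : Fin n → ℝ, lpSeminorm n p hp u = 1 ∧ lpSeminorm n p hp w = 1 ∧
      0 < lpSeminorm n p hp (u - w) ∧ lpSeminorm n p hp (u - w) ≤ 1 / 2 := by
  have hp0 : p ≠ 0 := by positivity
  have hsingle : ∀ (i : Fin n) (a : ℝ), lpSeminorm n p hp (Pi.single i a) = |a| := by
    intro i a
    rw [lpSeminorm_apply, Finset.sum_eq_single i, Pi.single_eq_same, ← Real.rpow_mul (abs_nonneg _),
      mul_one_div_cancel hp0, Real.rpow_one]
    · intro j _ hj
      rw [Pi.single_eq_of_ne hj, abs_zero, Real.zero_rpow hp0]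
    · simp
  let i : Fin n := ⟨0, by omega⟩
  let j : Fin n := ⟨1, by omega⟩
  have hij : j ≠ i := by simp [i, j]
  set q := lpSeminorm n p hp
  set u : Fin n → ℝ := Pi.single i 1
  set v : Fin n → ℝ := u + Pi.single j (1 / 4)
  have hu : q u = 1 := by rw [hsingle, abs_one]
  have hs : q (Pi.single j (1 / 4)) = 1 / 4 := by
    rw [hsingle, abs_of_pos (by norm_num)]
  have hvj : v j = 1 / 4 := by simp [v, u, hij]
  have hv : 0 < q v := lpSeminorm_pos hp fun h => by simp [h] at hvj
  have hvu : v - u = Pi.single j (1 / 4) := by simp [v]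
  have hv1 : |q v - 1| ≤ 1 / 4 := by
    have := abs_sub_map_le_sub q v u
    rwa [hu, hvu, hs] at this
  refine ⟨u, (q v)⁻¹ • v, hu, ?_, lpSeminorm_pos hp ?_, ?_⟩
  · rw [map_smul_eq_mul, norm_inv, Real.norm_of_nonneg hv.le, inv_mul_cancel₀ hv.ne']
  · intro h
    have := congrFun h j
    simp [u, hij, hvj, hv.ne'] at this
  · have h1 : u - (q v)⁻¹ • v = (1 - (q v)⁻¹) • v - Pi.single j (1 / 4) := by
      rw [← hvu, sub_smul, one_smul]
      abel
    have h2 : q ((1 - (q v)⁻¹) • v) = |q v - 1| := by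
      rw [map_smul_eq_mul, Real.norm_eq_abs, ← abs_of_pos hv, ← abs_mul, abs_of_pos hv, sub_mul,
        inv_mul_cancel₀ hv.ne', one_mul]
    rw [h1]
    refine (map_sub_le_add q _ _).trans ?_
    rw [h2, hs]
    linarith

/-- Any additive group of vectors of minimal `ℓ_p` norm at least `2ρ` leaves a hole of radius
`(1 + η)ρ`, with `η` depending only on the dimension and on `p`. -/
theorem exists_uniform_deep_hole {n : ℕ} (hn : 2 ≤ n) {p : ℝ} (hp : 1 < p) :
    ∃ η : ℝ, 0 < η ∧ η ≤ 1 ∧ ∀ (L : AddSubgroup (Fin n → ℝ)) (ρ : ℝ), 0 < ρ →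
      (∀ v ∈ L, v ≠ 0 → 2 * ρ ≤ lpSeminorm n p hp.le v) →
      ∃ x, ∀ v ∈ L, (1 + η) * ρ ≤ lpSeminorm n p hp.le (x - v) := by
  obtain ⟨u, w, hu, hw, hpos, hle⟩ := exists_unit_pair_lpSeminorm hn hp.le
  set q := lpSeminorm n p hp.le
  set s := q (u - w)
  set ε := s / 2 with hεdef
  obtain ⟨M, hM0, hM2, hM⟩ := exists_lpSeminorm_add_le (n := n) hp (half_pos hpos)
  set η := min (1 / 4) ((2 - M) / 4) with hη
  have hη0 : 0 < η := lt_min (by norm_num) (by linarith)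
  have hη4 : η ≤ 1 / 4 := min_le_left _ _
  have hηM : (1 + η) * M < 2 := by
    have : η ≤ (2 - M) / 4 := min_le_right _ _
    nlinarith
  refine ⟨η, hη0, by linarith, fun L ρ hρ hL => ?_⟩
  by_contra! hcon
  set R := (1 + η) * ρ
  have hR : 0 < R := by positivity
  have key : ∀ t : Fin n → ℝ, q t = 1 → ∃ v ∈ L, q (v - (2 * R) • t) < ε * R := by
    intro t ht
    obtain ⟨v, hvL, hv⟩ := hcon (R • t)
    have hRt : q (R • t) = R := by
      rw [map_smul_eq_mul, ht, mul_one, Real.norm_of_nonneg hR.le]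
    have hv0 : v ≠ 0 := by
      rintro rfl
      rw [sub_zero, hRt] at hv
      exact lt_irrefl _ hv
    refine ⟨v, hvL, ?_⟩
    by_contra! hfar
    have hRne := hR.ne'
    have hscale : ∀ z, q (R⁻¹ • z) = R⁻¹ * q z := fun z => by
      rw [map_smul_eq_mul, Real.norm_of_nonneg (inv_pos.mpr hR).le]
    have hy : R⁻¹ • v - t = R⁻¹ • (v - R • t) := by
      rw [smul_sub, smul_smul, inv_mul_cancel₀ hRne, one_smul]
    have hd : (R⁻¹ • v - t) - t = R⁻¹ • (v - (2 * R) • t) := by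
      rw [smul_sub, smul_smul, mul_left_comm, inv_mul_cancel₀ hRne, mul_one, two_smul, sub_sub]
    have h1 := hM (R⁻¹ • v - t) t
      (by rw [hy, hscale, map_sub_rev, inv_mul_le_one₀ hR]; exact hv.le) ht.le
      (by rw [hd, hscale, le_inv_mul_iff₀ hR, mul_comm]; exact hfar)
    rw [sub_add_cancel, hscale, inv_mul_le_iff₀ hR] at h1
    have h2 := hL v hvL hv0
    have h3 : R * M = (1 + η) * M * ρ := by ring
    nlinarith
  obtain ⟨v, hvL, hv⟩ := key u hu
  obtain ⟨v', hvL', hv'⟩ := key w hw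
  have hsc : q ((2 * R) • (u - w)) = 2 * R * s := by
    rw [map_smul_eq_mul, Real.norm_of_nonneg (by positivity)]
  have herr : q ((v - (2 * R) • u) - (v' - (2 * R) • w)) < s * R := by
    refine (map_sub_le_add q _ _).trans_lt ?_
    rw [hεdef] at hv hv'
    linarith
  have hne : v - v' ≠ 0 := by
    intro h
    have h1 : (v - (2 * R) • u) - (v' - (2 * R) • w) = -((2 * R) • (u - w)) := by
      rw [sub_eq_zero.mp h, smul_sub]
      abel
    rw [h1, map_neg_eq_map, hsc] at herr
    nlinarith
  have hlow := hL _ (L.sub_mem hvL hvL') hne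
  have hup : q (v - v') ≤ q ((v - (2 * R) • u) - (v' - (2 * R) • w)) + q ((2 * R) • (u - w)) := by
    have h1 : v - v' = ((v - (2 * R) • u) - (v' - (2 * R) • w)) + (2 * R) • (u - w) := by
      rw [smul_sub]
      abel
    conv_lhs => rw [h1]
    exact map_add_le_add q _ _
  have hRle : R ≤ 5 / 4 * ρ := by
    simp only [R]
    nlinarith
  nlinarith

theorem volume_superball_lt_top {n : ℕ} {p : ℝ} (hp : 1 ≤ p) (r : ℝ) :
    volume {x | lpSeminorm n p hp x < r} < ⊤ := by
  refine (measure_mono fun x hx => ?_).trans_lt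
    (measure_closedBall_lt_top (x := (0 : Fin n → ℝ)) (r := |r|))
  rw [mem_closedBall_zero_iff, pi_norm_le_iff_of_nonneg (abs_nonneg r)]
  exact fun i => (abs_apply_le_lpSeminorm hp x i).trans (hx.le.trans (le_abs_self r))

theorem volume_real_superball_le {n : ℕ} (hn : 0 < n) {p : ℝ} (hp : 1 ≤ p) {r : ℝ} (hr : 0 ≤ r) :
    volume.real {x | lpSeminorm n p hp x ≤ r} = Vnp n p * r ^ n := by
  have : Nonempty (Fin n) := ⟨⟨0, hn⟩⟩
  have h1 : {x : Fin n → ℝ | ∑ i, |x i| ^ p ≤ 1} =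
      {x | (∑ i, |x i| ^ p) ^ (1 / p) ≤ 1} := by
    ext x
    have := lpSeminorm_le_iff hp x zero_le_one
    rw [Real.one_rpow] at this
    exact this.symm
  have h2 := volume_sum_rpow_le (Fin n) hp r
  have h3 := volume_sum_rpow_le (Fin n) hp 1
  simp only [ENNReal.ofReal_one, one_pow, one_mul, Fintype.card_fin] at h2 h3
  rw [Vnp, h1, h3, measureReal_def]
  change (volume {x : Fin n → ℝ | (∑ i, |x i| ^ p) ^ (1 / p) ≤ r}).toReal = _
  rw [h2, ENNReal.toReal_mul, ENNReal.toReal_pow, ENNReal.toReal_ofReal hr, mul_comm]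

theorem volume_real_superball_lt {n : ℕ} (hn : 0 < n) {p : ℝ} (hp : 1 ≤ p) {r : ℝ} (hr : 0 ≤ r) :
    volume.real {x | lpSeminorm n p hp x < r} = Vnp n p * r ^ n := by
  have : Nonempty (Fin n) := ⟨⟨0, hn⟩⟩
  rw [← volume_real_superball_le hn hp hr, measureReal_def, measureReal_def]
  exact congrArg ENNReal.toReal
    ((volume_sum_rpow_lt (Fin n) hp r).trans (volume_sum_rpow_le (Fin n) hp r).symm)

/-- A set whose translates by a lattice are pairwise disjoint has measure at most the covolume. -/
theorem measure_real_le_covolume {n : ℕ} (L : Submodule ℤ (Fin n → ℝ)) [DiscreteTopology L]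
    [IsZLattice ℝ L] {s : Set (Fin n → ℝ)} (hs : MeasurableSet s)
    (hdisj : ∀ x ∈ s, ∀ y ∈ s, x - y ∈ L → x = y) :
    volume.real s ≤ ZLattice.covolume L volume := by
  have : MeasurableVAdd L (Fin n → ℝ) := (inferInstance : MeasurableVAdd L.toAddSubgroup _)
  have : VAddInvariantMeasure L (Fin n → ℝ) volume :=
    (inferInstance : VAddInvariantMeasure L.toAddSubgroup _ volume)
  have hF := ZLattice.isAddFundamentalDomain (Module.Free.chooseBasis ℤ L) volume
  rw [ZLattice.covolume_eq_measure_fundamentalDomain L volume hF]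
  refine ENNReal.toReal_mono (ZSpan.fundamentalDomain_isBounded _).measure_lt_top.ne ?_
  by_contra! hlt
  obtain ⟨a, b, hab, h⟩ := exists_pair_mem_lattice_not_disjoint_vadd hF hs.nullMeasurableSet hlt
  obtain ⟨_, ⟨x, hx, rfl⟩, y, hy, hxy⟩ := Set.not_disjoint_iff.mp h
  have hxy' : (b : Fin n → ℝ) + y = a + x := hxy
  have hsub : x - y = ((b - a : L) : Fin n → ℝ) := by
    rw [AddSubgroupClass.coe_sub, sub_eq_sub_iff_add_eq_add, add_comm x, hxy']
  have heq := hdisj x hx y hy (hsub ▸ (b - a).2)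
  rw [heq, sub_self, eq_comm, ZeroMemClass.coe_eq_zero, sub_eq_zero] at hsub
  exact hab hsub.symm

/-- A set whose translates by a lattice cover the space has measure at least the covolume. -/
theorem covolume_le_measure_real {n : ℕ} (L : Submodule ℤ (Fin n → ℝ)) [DiscreteTopology L]
    [IsZLattice ℝ L] {s : Set (Fin n → ℝ)} (hs : volume s ≠ ⊤)
    (hcover : ∀ x, ∃ v ∈ L, x - v ∈ s) :
    ZLattice.covolume L volume ≤ volume.real s := by
  have : MeasurableVAdd L (Fin n → ℝ) := (inferInstance : MeasurableVAdd L.toAddSubgroup _)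
  have : VAddInvariantMeasure L (Fin n → ℝ) volume :=
    (inferInstance : VAddInvariantMeasure L.toAddSubgroup _ volume)
  have hF := ZLattice.isAddFundamentalDomain (Module.Free.chooseBasis ℤ L) volume
  rw [ZLattice.covolume_eq_measure_fundamentalDomain L volume hF]
  refine ENNReal.toReal_mono hs ?_
  rw [hF.measure_eq_tsum s]
  refine (measure_mono fun x hx => ?_).trans (measure_iUnion_le _)
  obtain ⟨v, hv, hxv⟩ := hcover x
  exact Set.mem_iUnion.mpr ⟨⟨v, hv⟩, ⟨x - v, hxv, add_sub_cancel v x⟩, hx⟩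

theorem exists_densitySet_bound {n : ℕ} (hn : 2 ≤ n) {p : ℝ} (hp : 1 < p) :
    ∃ B : ℝ, 0 ≤ B ∧ B < 1 ∧ ∀ δ ∈ densitySet n p, δ ≤ B := by
  obtain ⟨η, hη0, hη1, hhole⟩ := exists_uniform_deep_hole hn hp
  have hηn : 0 < η ^ n := by positivity
  refine ⟨(1 + η ^ n)⁻¹, by positivity, inv_lt_one_of_one_lt₀ (by linarith), ?_⟩
  rintro _ ⟨L, _, _, d, ⟨⟨v₀, hv₀, hv₀0, hd⟩, hmin⟩, rfl⟩
  set q := lpSeminorm n p hp.le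
  have hd0 : 0 < d := by
    rw [hd]
    exact lpSeminorm_pos hp.le hv₀0
  have hL : ∀ v ∈ L, v ≠ 0 → d ≤ q v := fun v hv h0 => hmin ⟨v, hv, h0, rfl⟩
  set ρ := d / 2 with hρdef
  have hρ : 0 < ρ := half_pos hd0
  have hdρ : d = 2 * ρ := by rw [hρdef]; ring
  obtain ⟨x, hx⟩ := hhole L.toAddSubgroup ρ hρ fun v hv h0 => hdρ ▸ hL v hv h0
  have hx' : ∀ v ∈ L, (1 + η) * ρ ≤ q (x - v) := hx
  have hq : Continuous q := continuous_lpSeminorm hp.le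
  set s : Set (Fin n → ℝ) := {y | q y < ρ}
  set t : Set (Fin n → ℝ) := (fun y => y + -x) ⁻¹' {y | q y < η * ρ}
  have hηρ : η * ρ ≤ ρ := by nlinarith
  have hs : MeasurableSet s := (isOpen_lt hq continuous_const).measurableSet
  have ht : MeasurableSet t :=
    ((isOpen_lt hq continuous_const).preimage (continuous_id.add continuous_const)).measurableSet
  have hmemt : ∀ y, y ∈ t ↔ q (y - x) < η * ρ := fun y => by
    rw [sub_eq_add_neg]
    rfl
  have hst : ∀ a ∈ s, ∀ b ∈ t, b - a ∉ L := by
    intro a ha b hb hab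
    have h1 := hx' _ hab
    have h2 : x - (b - a) = a - (b - x) := by abel
    have h3 := map_sub_le_add q a (b - x)
    rw [h2] at h1
    have h4 : q a < ρ := ha
    have h5 := (hmemt b).mp hb
    linarith
  have hclose : ∀ a b : Fin n → ℝ, a - b ∈ L → q (a - b) < d → a = b := by
    intro a b hab hlt
    by_contra hne
    exact absurd (hL _ hab (sub_ne_zero.mpr hne)) hlt.not_ge
  have hpack := measure_real_le_covolume L (hs.union ht) (by
    rintro a (ha | ha) b (hb | hb) hab
    · refine hclose a b hab ((map_sub_le_add q a b).trans_lt ?_)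
      have h1 : q a < ρ := ha
      have h2 : q b < ρ := hb
      linarith
    · exact absurd (by simpa using L.neg_mem hab) (hst a ha b hb)
    · exact absurd hab (hst b hb a ha)
    · refine hclose a b hab ?_
      have h1 := (hmemt a).mp ha
      have h2 := (hmemt b).mp hb
      rw [← sub_sub_sub_cancel_right a b x]
      exact (map_sub_le_add q _ _).trans_lt (by linarith))
  have hdis : Disjoint s t := Set.disjoint_left.mpr fun a ha hat =>
    hst a ha a hat (by rw [sub_self]; exact L.zero_mem)
  have htvol : volume t = volume {y | q y < η * ρ} := measure_preimage_add_right volume (-x) _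
  rw [measureReal_union hdis ht (volume_superball_lt_top hp.le _).ne
    (htvol ▸ (volume_superball_lt_top hp.le _).ne), measureReal_def (s := t), htvol,
    ← measureReal_def, volume_real_superball_lt (by omega) hp.le hρ.le,
    volume_real_superball_lt (by omega) hp.le (by positivity), mul_pow] at hpack
  have hcov := ZLattice.covolume_pos L volume
  rw [div_le_iff₀ hcov, inv_mul_eq_div, le_div_iff₀ (by positivity)]
  linarith

/-- The subgroup of `ℝ^n` formed by the vectors of a subgroup of `ℤ^n`. -/
noncomputable def realLattice {n : ℕ} (Λ : AddSubgroup (Fin n → ℤ)) : Submodule ℤ (Fin n → ℝ) :=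
  (Λ.map ((Int.castAddHom ℝ).compLeft (Fin n))).toIntSubmodule

instance discreteTopology_realLattice {n : ℕ} (Λ : AddSubgroup (Fin n → ℤ)) :
    DiscreteTopology (realLattice Λ) := by
  have h : (realLattice Λ : Set (Fin n → ℝ)) ⊆
      Submodule.span ℤ (Set.range (Pi.basisFun ℝ (Fin n))) := by
    rintro _ ⟨c, -, rfl⟩
    exact ((Pi.basisFun ℝ (Fin n)).mem_span_iff_repr_mem ℤ _).mpr fun i => ⟨c i, rfl⟩
  exact DiscreteTopology.of_subset (inferInstanceAs (DiscreteTopology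
    (Submodule.span ℤ (Set.range (Pi.basisFun ℝ (Fin n)))))) h

theorem dp_eq_lpSeminorm {n : ℕ} {p : ℝ} (hp : 1 ≤ p) (x y : Fin n → ℤ) :
    dp n p x y = lpSeminorm n p hp ((fun i => (x i : ℝ)) - fun i => (y i : ℝ)) := rfl

theorem finite_setOf_lpSeminorm_intCast_le {n : ℕ} {p : ℝ} (hp : 1 ≤ p) (r : ℝ) :
    {z : Fin n → ℤ | lpSeminorm n p hp (fun i => (z i : ℝ)) ≤ r}.Finite := by
  refine (Set.finite_Icc (fun _ => -⌈r⌉) (fun _ => ⌈r⌉)).subset fun z hz => ?_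
  have h : ∀ i, |z i| ≤ ⌈r⌉ := fun i => by
    have h1 := (abs_apply_le_lpSeminorm hp (fun i => (z i : ℝ)) i).trans (hz.trans (Int.le_ceil r))
    exact_mod_cast h1
  exact ⟨fun i => (abs_le.mp (h i)).1, fun i => (abs_le.mp (h i)).2⟩

theorem isZLattice_realLattice {n : ℕ} {p : ℝ} (hp : 1 ≤ p) {Λ : AddSubgroup (Fin n → ℤ)} {r : ℝ}
    (h : ∀ z : Fin n → ℤ, ∃ c ∈ Λ, dp n p z c ≤ r) : IsZLattice ℝ (realLattice Λ) := by
  refine ⟨?_⟩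
  rw [eq_top_iff, ← (Pi.basisFun ℝ (Fin n)).span_eq, Submodule.span_le]
  rintro _ ⟨i, rfl⟩
  choose c hc hcr using fun k : ℕ => h (Pi.single i (k : ℤ))
  have hmaps : Set.MapsTo (fun k : ℕ => (Pi.single i (k : ℤ) - c k : Fin n → ℤ)) Set.univ
      {z | lpSeminorm n p hp (fun i => (z i : ℝ)) ≤ r} := fun k _ => by
    have hk := hcr k
    rw [dp_eq_lpSeminorm hp] at hk
    have hcast : (fun j => (((Pi.single i (k : ℤ) - c k : Fin n → ℤ) j : ℤ) : ℝ)) =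
        (fun j => ((Pi.single i (k : ℤ) : Fin n → ℤ) j : ℝ)) - fun j => (c k j : ℝ) :=
      funext fun j => Int.cast_sub _ _
    rwa [Set.mem_ofPred_eq, hcast]
  obtain ⟨k, -, l, -, hkl, heq⟩ := Set.infinite_univ.exists_ne_map_eq_of_mapsTo hmaps
    (finite_setOf_lpSeminorm_intCast_le hp r)
  have hmem : (Pi.single i ((k : ℤ) - l) : Fin n → ℤ) ∈ Λ := by
    rw [Pi.single_sub, show (Pi.single i (k : ℤ) - Pi.single i (l : ℤ) : Fin n → ℤ) = c k - c l by
      rw [sub_eq_sub_iff_sub_eq_sub]; exact heq]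
    exact Λ.sub_mem (hc k) (hc l)
  have hkl' : (k : ℝ) - l ≠ 0 := sub_ne_zero.mpr (by exact_mod_cast hkl)
  have hb : Pi.basisFun ℝ (Fin n) i =
      ((k : ℝ) - l)⁻¹ • fun j => ((Pi.single i ((k : ℤ) - l) : Fin n → ℤ) j : ℝ) := by
    ext j
    rcases eq_or_ne j i with rfl | hj
    · simp [inv_mul_cancel₀ hkl']
    · simp [hj]
  rw [hb]
  exact Submodule.smul_mem _ _ (Submodule.subset_span ⟨_, hmem, rfl⟩)

theorem exists_lpSeminorm_sub_intCast_le {n : ℕ} {p : ℝ} (hp : 1 ≤ p) (x : Fin n → ℝ) :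
    ∃ z : Fin n → ℤ, lpSeminorm n p hp (x - fun i => (z i : ℝ)) ≤ (n : ℝ) ^ (1 / p) / 2 := by
  have hp0 : p ≠ 0 := by positivity
  refine ⟨fun i => round (x i), ?_⟩
  rw [lpSeminorm_le_iff hp _ (by positivity), Real.div_rpow (by positivity) (by positivity),
    ← Real.rpow_mul (by positivity), one_div_mul_cancel hp0, Real.rpow_one]
  calc ∑ i, |(x - fun i => (round (x i) : ℝ)) i| ^ p ≤ ∑ _i : Fin n, (1 / 2 : ℝ) ^ p :=
        Finset.sum_le_sum fun i _ =>
          Real.rpow_le_rpow (abs_nonneg _) (abs_sub_round (x i)) (by positivity)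
    _ = n / 2 ^ p := by
        rw [Finset.sum_const, card_univ, Fintype.card_fin, nsmul_eq_mul,
          Real.div_rpow zero_le_one zero_le_two, Real.one_rpow, mul_one_div]

theorem exists_isLeast_lpSeminorm_realLattice {n : ℕ} {p : ℝ} (hp : 1 ≤ p)
    {Λ : AddSubgroup (Fin n → ℤ)} (hΛ : ∃ v ∈ realLattice Λ, v ≠ 0) :
    ∃ d, IsLeast {e : ℝ | ∃ v ∈ realLattice Λ, v ≠ 0 ∧ e = (∑ i, |v i| ^ p) ^ (1 / p)} d := by
  obtain ⟨v₀, hv₀, hne⟩ := hΛ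
  set q := lpSeminorm n p hp
  set T : Set (Fin n → ℝ) := {v | v ∈ realLattice Λ ∧ v ≠ 0 ∧ q v ≤ q v₀}
  have hT : T.Finite := by
    refine ((finite_setOf_lpSeminorm_intCast_le hp (q v₀)).image fun z i => (z i : ℝ)).subset ?_
    rintro _ ⟨⟨c, -, rfl⟩, -, hle⟩
    exact ⟨c, hle, rfl⟩
  obtain ⟨v, ⟨hv, hv0, hvle⟩, hmin⟩ := Set.exists_min_image T q hT ⟨v₀, hv₀, hne, le_rfl⟩
  refine ⟨q v, ⟨v, hv, hv0, rfl⟩, ?_⟩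
  rintro _ ⟨w, hw, hw0, rfl⟩
  change q v ≤ q w
  rcases le_total (q w) (q v₀) with h | h
  · exact hmin w ⟨hw, hw0, h⟩
  · exact hvle.trans h

theorem exists_mem_densitySet_of_perfect {n : ℕ} (hn : 0 < n) {p : ℝ} (hp : 1 ≤ p)
    {Λ : AddSubgroup (Fin n → ℤ)} {r : ℝ} (hr : (n : ℝ) ^ (1 / p) / 2 < r)
    (h : ∀ z : Fin n → ℤ, ∃! c, c ∈ Λ ∧ dp n p z c ≤ r) :
    ∃ δ ∈ densitySet n p,
      ((r - (n : ℝ) ^ (1 / p) / 2) / (r + (n : ℝ) ^ (1 / p) / 2)) ^ n ≤ δ := by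
  set m := (n : ℝ) ^ (1 / p) / 2
  have hm : 0 ≤ m := by positivity
  set q := lpSeminorm n p hp
  have hZ : IsZLattice ℝ (realLattice Λ) :=
    isZLattice_realLattice hp fun z => (h z).exists.imp fun c hc => hc
  have hne : ∃ v ∈ realLattice Λ, v ≠ 0 := by
    by_contra! hzero
    have hspan := hZ.span_top
    have : Nonempty (Fin n) := ⟨⟨0, hn⟩⟩
    refine bot_ne_top (α := Submodule ℝ (Fin n → ℝ)) ?_
    rw [← hspan, eq_comm, Submodule.span_eq_bot]
    exact hzero
  obtain ⟨d, hd⟩ := exists_isLeast_lpSeminorm_realLattice hp hne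
  refine ⟨_, ⟨realLattice Λ, inferInstance, hZ, d, hd, rfl⟩, ?_⟩
  have hcov := ZLattice.covolume_pos (realLattice Λ) volume
  have hcover : ZLattice.covolume (realLattice Λ) volume ≤ Vnp n p * (r + m) ^ n := by
    rw [← volume_real_superball_le hn hp (by linarith)]
    refine covolume_le_measure_real _ ?_ fun x => ?_
    · exact ((measure_mono fun x hx => lt_of_le_of_lt hx (lt_add_one (r + m))).trans_lt
        (volume_superball_lt_top hp (r + m + 1))).ne
    · obtain ⟨z, hz⟩ := exists_lpSeminorm_sub_intCast_le hp x
      obtain ⟨c, hc, hcr⟩ := (h z).exists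
      refine ⟨fun i => (c i : ℝ), ⟨c, hc, rfl⟩, ?_⟩
      have h1 := map_add_le_add q (x - fun i => (z i : ℝ))
        ((fun i => (z i : ℝ)) - fun i => (c i : ℝ))
      rw [sub_add_sub_cancel] at h1
      rw [dp_eq_lpSeminorm hp] at hcr
      exact h1.trans ((add_le_add hz hcr).trans_eq (add_comm m r))
  have hpack : r - m ≤ d / 2 := by
    obtain ⟨⟨_, ⟨c, hc, rfl⟩, hc0, rfl⟩, -⟩ := hd
    by_contra! hlt
    set v : Fin n → ℝ := fun i => (c i : ℝ) with hv
    change q v / 2 < r - m at hlt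
    have hhalf : q ((1 / 2 : ℝ) • v) = q v / 2 := by
      rw [map_smul_eq_mul, Real.norm_of_nonneg (by norm_num), one_div_mul_eq_div]
    obtain ⟨z, hz⟩ := exists_lpSeminorm_sub_intCast_le hp ((1 / 2 : ℝ) • v)
    set y : Fin n → ℝ := fun i => (z i : ℝ)
    have hz' : q (y - (1 / 2 : ℝ) • v) ≤ m := by rwa [map_sub_rev]
    have h0 : dp n p z 0 ≤ r := by
      have h1 := map_add_le_add q (y - (1 / 2 : ℝ) • v) ((1 / 2 : ℝ) • v)
      rw [sub_add_cancel, hhalf] at h1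
      have h2 : dp n p z 0 = q y := by
        rw [dp_eq_lpSeminorm hp]
        congr 1
        ext i
        simp [y]
      linarith
    have hcz : dp n p z c ≤ r := by
      have h1 := map_sub_le_add q (y - (1 / 2 : ℝ) • v) ((1 / 2 : ℝ) • v)
      rw [sub_sub, ← add_smul, add_halves, one_smul, hhalf] at h1
      rw [dp_eq_lpSeminorm hp]
      change q (y - v) ≤ r
      linarith
    have hc00 : c = 0 := (h z).unique ⟨hc, hcz⟩ ⟨Λ.zero_mem, h0⟩
    refine hc0 ?_
    change v = 0
    ext i
    simp [hv, hc00]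
  have hrm : 0 < r + m := by linarith
  have hV : 0 ≤ Vnp n p := ENNReal.toReal_nonneg
  rw [le_div_iff₀ hcov, div_pow, div_mul_eq_mul_div, div_le_iff₀ (by positivity)]
  have h1 : (r - m) ^ n ≤ (d / 2) ^ n := pow_le_pow_left₀ (by linarith) hpack n
  calc (r - m) ^ n * ZLattice.covolume (realLattice Λ) volume
      ≤ (d / 2) ^ n * (Vnp n p * (r + m) ^ n) := by
        refine mul_le_mul h1 hcover hcov.le ?_
        exact (pow_nonneg (by linarith) n).trans h1
    _ = Vnp n p * (d / 2) ^ n * (r + m) ^ n := by ring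

/-- The optimal superball packing density `Δ_p^n` satisfies `Δ_p^n < 1`, and the radius of
any linear `r`-perfect code in `ℤ^n` in the `ℓ_p` metric (for `1 < p < ∞`, `n ≥ 2`)
satisfies `r ≤ (n^{1/p}/2)·(1 + (Δ_p^n)^{1/n})/(1 − (Δ_p^n)^{1/n})`. -/
theorem perfect_code_radius_bound (n : ℕ) (hn : 2 ≤ n) (p : ℝ) (hp : 1 < p) :
    sSup (densitySet n p) < 1 ∧
    ∀ (Λ : AddSubgroup (Fin n → ℤ)) (r : ℝ), 0 ≤ r →
      (∀ z : Fin n → ℤ, ∃! c, c ∈ Λ ∧ dp n p z c ≤ r) →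
      r ≤ (n : ℝ) ^ (1 / p) / 2 *
        ((1 + sSup (densitySet n p) ^ ((1 : ℝ) / n)) /
          (1 - sSup (densitySet n p) ^ ((1 : ℝ) / n))) := by
  obtain ⟨B, hB0, hB1, hB⟩ := exists_densitySet_bound hn hp
  have hbdd : BddAbove (densitySet n p) := ⟨B, hB⟩
  have hlt : sSup (densitySet n p) < 1 := (Real.sSup_le hB hB0).trans_lt hB1
  refine ⟨hlt, fun Λ r _ h => ?_⟩
  have hn0 : n ≠ 0 := by omega
  set m := (n : ℝ) ^ (1 / p) / 2
  have hm : 0 ≤ m := by positivity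
  have hΔ0 : 0 ≤ sSup (densitySet n p) := by
    refine Real.sSup_nonneg ?_
    rintro _ ⟨L, _, _, d, ⟨⟨v, -, -, rfl⟩, -⟩, rfl⟩
    have := ZLattice.covolume_pos L volume
    have : 0 ≤ Vnp n p := ENNReal.toReal_nonneg
    positivity
  set D := sSup (densitySet n p) ^ ((1 : ℝ) / n) with hD
  have hD0 : 0 ≤ D := Real.rpow_nonneg hΔ0 _
  have hD1 : D < 1 := Real.rpow_lt_one hΔ0 hlt (by positivity)
  rw [← mul_div_assoc, le_div_iff₀ (by linarith)]
  rcases le_or_gt r m with hrm | hrm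
  · nlinarith
  · obtain ⟨δ, hδ, hle⟩ := exists_mem_densitySet_of_perfect (by omega) hp.le hrm h
    have hr0 : 0 < r + m := by linarith
    have hroot : (r - m) / (r + m) ≤ D := by
      rw [hD, one_div, ← Real.pow_rpow_inv_natCast
        (div_nonneg (sub_nonneg.mpr hrm.le) hr0.le) hn0]
      exact Real.rpow_le_rpow (pow_nonneg (div_nonneg (sub_nonneg.mpr hrm.le) hr0.le) n)
        (hle.trans (le_csSup hbdd hδ)) (by positivity)
    rw [div_le_iff₀ hr0] at hroot
    linarith
end
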